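/- (Formula for v-adic multiple zeta star values at negative integers in terms of ∞-adic ones.) Let r ≥ 1 and m_1,…,m_r ∈ ℤ_{≥0}. Then in A: ζ_v⋆(−m_1,…,−m_r) = Σ_{l=0}^{r} (−1)^l · ζ⋆_{<d}(−m_{l+1},…,−m_r) · [ Σ_{(a_1,…,a_l)} v^{a_1+⋯+a_l} · ζ_{<d}(−(m_1−a_1)) ⋯ ζ_{<d}(−(m_l−a_l)) · C(m_1,a_1) ⋯ C(m_l,a_l) · ζ_∞⋆(−a_1,…,−a_l) ], where the inner sum runs over all integer tuples (a_1,…,a_l) with 0 ≤ a_j ≤ m_j and (q−1) | (m_j − a_j) for all 1 ≤ j ≤ l, and the l = 0 summand is ζ⋆_{<d}(−m_1,…,−m_r). -/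

import Mathlib

open Polynomial

/-- The power sum `S_i(-m)`: the sum of `n ^ m` over monic polynomials `n` of degree `i`. -/
noncomputable def powerSum (F : Type*) [Field F] [Fintype F] (i m : ℕ) : Polynomial F :=
  ∑ᶠ n ∈ {n : Polynomial F | n.Monic ∧ n.natDegree = i}, n ^ m

/-- The restricted power sum `S̃_i(-m)`: the sum of `n ^ m` over monic polynomials `n` of
degree `i` not divisible by `v`. -/
noncomputable def powerSumV (F : Type*) [Field F] [Fintype F] (v : Polynomial F) (i m : ℕ) :
    Polynomial F :=
  ∑ᶠ n ∈ {n : Polynomial F | n.Monic ∧ n.natDegree = i ∧ ¬ v ∣ n}, n ^ m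

/-- `ζ_∞(-m_1, …, -m_r)`, the ∞-adic multiple zeta value at nonpositive integers:
the sum over `i_1 > ⋯ > i_r ≥ 0` of `S_{i_1}(-m_1) ⋯ S_{i_r}(-m_r)`.
Only `m 0, …, m (r-1)` are used.  The depth-0 value is `1`. -/
noncomputable def zetaInf (F : Type*) [Field F] [Fintype F] (r : ℕ) (m : ℕ → ℕ) :
    Polynomial F :=
  ∑ᶠ i ∈ {i : Fin r → ℕ | StrictAnti i}, ∏ j : Fin r, powerSum F (i j) (m (j : ℕ))

/-- `ζ⋆_∞(-m_1, …, -m_r)`, the ∞-adic multiple zeta star value at nonpositive integers: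
the sum over `i_1 ≥ ⋯ ≥ i_r ≥ 0` of `S_{i_1}(-m_1) ⋯ S_{i_r}(-m_r)`. -/
noncomputable def zetaInfStar (F : Type*) [Field F] [Fintype F] (r : ℕ) (m : ℕ → ℕ) :
    Polynomial F :=
  ∑ᶠ i ∈ {i : Fin r → ℕ | Antitone i}, ∏ j : Fin r, powerSum F (i j) (m (j : ℕ))

/-- `ζ_v(-m_1, …, -m_r)`, the v-adic multiple zeta value at nonpositive integers. -/
noncomputable def zetaV (F : Type*) [Field F] [Fintype F] (v : Polynomial F) (r : ℕ)
    (m : ℕ → ℕ) : Polynomial F :=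
  ∑ᶠ i ∈ {i : Fin r → ℕ | StrictAnti i}, ∏ j : Fin r, powerSumV F v (i j) (m (j : ℕ))

/-- `ζ⋆_v(-m_1, …, -m_r)`, the v-adic multiple zeta star value at nonpositive integers. -/
noncomputable def zetaVStar (F : Type*) [Field F] [Fintype F] (v : Polynomial F) (r : ℕ)
    (m : ℕ → ℕ) : Polynomial F :=
  ∑ᶠ i ∈ {i : Fin r → ℕ | Antitone i}, ∏ j : Fin r, powerSumV F v (i j) (m (j : ℕ))

/-- `ζ_{<d}(-m_1, …, -m_r)`, the truncated multiple zeta value: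
the sum over `d > i_1 > ⋯ > i_r ≥ 0` of `S_{i_1}(-m_1) ⋯ S_{i_r}(-m_r)`. -/
noncomputable def zetaLt (F : Type*) [Field F] [Fintype F] (d r : ℕ) (m : ℕ → ℕ) :
    Polynomial F :=
  ∑ᶠ i ∈ {i : Fin r → ℕ | StrictAnti i ∧ ∀ j, i j < d},
    ∏ j : Fin r, powerSum F (i j) (m (j : ℕ))

/-- `ζ⋆_{<d}(-m_1, …, -m_r)`, the truncated multiple zeta star value. -/
noncomputable def zetaLtStar (F : Type*) [Field F] [Fintype F] (d r : ℕ) (m : ℕ → ℕ) :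
    Polynomial F :=
  ∑ᶠ i ∈ {i : Fin r → ℕ | Antitone i ∧ ∀ j, i j < d},
    ∏ j : Fin r, powerSum F (i j) (m (j : ℕ))

/-- `ζ_{<d}(-m)`, the depth-one truncated zeta value `Σ_{d > i ≥ 0} S_i(-m)`. -/
noncomputable def zetaLtOne (F : Type*) [Field F] [Fintype F] (d m : ℕ) : Polynomial F :=
  ∑ᶠ i ∈ {i : ℕ | i < d}, powerSum F i m

section FinitePolynomialSets

variable (F : Type*) [Field F] [Fintype F]

/-- The polynomials of degree less than `d` over a finite field form a finite set. -/
lemma finite_setOf_degree_lt (d : ℕ) : {c : Polynomial F | c.degree < d}.Finite := by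
  have : Finite (degreeLT F d) := Finite.of_equiv _ (degreeLTEquiv F d).toEquiv.symm
  refine (Set.toFinite (degreeLT F d : Set (Polynomial F))).subset fun c hc => ?_
  simpa [mem_degreeLT] using hc

/-- The monic polynomials of degree `i` over a finite field form a finite set. -/
lemma finite_setOf_monic_natDegree (i : ℕ) :
    {n : Polynomial F | n.Monic ∧ n.natDegree = i}.Finite := by
  refine (finite_setOf_degree_lt F (i + 1)).subset fun n hn => ?_
  rw [Set.mem_ofPred_eq, degree_eq_natDegree hn.1.ne_zero, hn.2]
  exact_mod_cast Nat.lt_succ_self i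

/-- The finset of polynomials of degree less than `d`. -/
noncomputable def polysLT (d : ℕ) : Finset (Polynomial F) :=
  (finite_setOf_degree_lt F d).toFinset

/-- The finset of monic polynomials of degree `i`. -/
noncomputable def monicPolys (i : ℕ) : Finset (Polynomial F) :=
  (finite_setOf_monic_natDegree F i).toFinset

variable {F}

lemma mem_polysLT {d : ℕ} {c : Polynomial F} : c ∈ polysLT F d ↔ c.degree < d := by
  simp [polysLT]

lemma mem_monicPolys {i : ℕ} {n : Polynomial F} :
    n ∈ monicPolys F i ↔ n.Monic ∧ n.natDegree = i := by
  simp [monicPolys]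

lemma powerSum_eq_sum (i m : ℕ) : powerSum F i m = ∑ n ∈ monicPolys F i, n ^ m :=
  finsum_mem_eq_finite_toFinset_sum _ (finite_setOf_monic_natDegree F i)

open Classical in
lemma powerSumV_eq_sum (v : Polynomial F) (i m : ℕ) :
    powerSumV F v i m = ∑ n ∈ monicPolys F i with ¬ v ∣ n, n ^ m := by
  rw [powerSumV, ← finsum_mem_coe_finset]
  congr! 4 with n
  simp [mem_monicPolys, and_assoc]

/-- Division with remainder by a monic `v`, as a reindexing of sums over monic polynomials. -/
lemma sum_monicPolys_add {M : Type*} [AddCommMonoid M] {v : Polynomial F} (hv : v.Monic)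
    (i : ℕ) (g : Polynomial F → M) :
    ∑ n ∈ monicPolys F (i + v.natDegree), g n =
      ∑ b ∈ monicPolys F i, ∑ c ∈ polysLT F v.natDegree, g (v * b + c) := by
  rw [← Finset.sum_product']
  have hlt : ∀ b ∈ monicPolys F i, ∀ c ∈ polysLT F v.natDegree,
      c.degree < (v * b).degree := by
    intro b hb c hc
    rw [mem_monicPolys] at hb
    rw [mem_polysLT] at hc
    rw [degree_mul, degree_eq_natDegree hv.ne_zero, degree_eq_natDegree hb.1.ne_zero]
    refine hc.trans_le ?_
    exact_mod_cast Nat.le_add_right _ _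
  symm
  refine Finset.sum_bij' (fun p _ => v * p.1 + p.2) (fun n _ => (n /ₘ v, n %ₘ v)) ?_ ?_ ?_ ?_ ?_
  · rintro ⟨b, c⟩ hp
    obtain ⟨hb, hc⟩ := Finset.mem_product.1 hp
    have h := hlt b hb c hc
    rw [mem_monicPolys] at hb ⊢
    refine ⟨(hv.mul hb.1).add_of_left h, ?_⟩
    rw [natDegree_add_eq_left_of_degree_lt h, hv.natDegree_mul hb.1, hb.2, add_comm]
  · intro n hn
    rw [mem_monicPolys] at hn
    have hdeg : v.degree ≤ n.degree := by
      rw [degree_eq_natDegree hv.ne_zero, degree_eq_natDegree hn.1.ne_zero, hn.2]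
      exact_mod_cast Nat.le_add_left _ _
    refine Finset.mem_product.2 ⟨mem_monicPolys.2 ⟨?_, ?_⟩, mem_polysLT.2 ?_⟩
    · rw [Monic, leadingCoeff_divByMonic_of_monic hv hdeg, hn.1]
    · rw [natDegree_divByMonic _ hv, hn.2, Nat.add_sub_cancel]
    · rw [← degree_eq_natDegree hv.ne_zero]
      exact degree_modByMonic_lt _ hv
  · rintro ⟨b, c⟩ hp
    obtain ⟨-, hc⟩ := Finset.mem_product.1 hp
    rw [mem_polysLT, ← degree_eq_natDegree hv.ne_zero] at hc
    obtain ⟨h₁, h₂⟩ := div_modByMonic_unique b c hv ⟨add_comm _ _, hc⟩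
    exact Prod.ext h₁ h₂
  · intro n _
    rw [add_comm]
    exact modByMonic_add_div n v
  · intro _ _
    rfl

/-- Binomial expansion of a sum of `m`-th powers of `v * b + c`. -/
lemma sum_sum_mul_add_pow {K : Type*} [CommSemiring K] (v : K) (B T : Finset K) (m : ℕ) :
    ∑ b ∈ B, ∑ c ∈ T, (v * b + c) ^ m =
      ∑ a ∈ Finset.range (m + 1),
        v ^ a * (m.choose a : K) * (∑ c ∈ T, c ^ (m - a)) * ∑ b ∈ B, b ^ a := by
  simp_rw [add_pow, mul_pow, Finset.mul_sum, Finset.sum_mul]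
  conv_rhs => rw [Finset.sum_comm]
  refine Finset.sum_congr rfl fun b _ => ?_
  rw [Finset.sum_comm]
  exact Finset.sum_congr rfl fun a _ => Finset.sum_congr rfl fun c _ => by ring

lemma sum_polysLT_one {M : Type*} [AddCommMonoid M] (g : Polynomial F → M) :
    ∑ c ∈ polysLT F 1, g c = ∑ x : F, g (C x) := by
  symm
  refine Finset.sum_bij' (fun x _ => C x) (fun c _ => c.coeff 0) ?_ ?_ ?_ ?_ ?_
  · intro x _
    exact mem_polysLT.2 (degree_C_le.trans_lt (by norm_num))
  · simp
  · simp
  · intro c hc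
    rw [mem_polysLT] at hc
    exact (eq_C_of_degree_le_zero (Nat.WithBot.lt_one_iff_le_zero.1 (by simpa using hc))).symm
  · simp

lemma powerSum_eq_zero {i m : ℕ} (h : m < i) : powerSum F i m = 0 := by
  induction i generalizing m with
  | zero => omega
  | succ i ih =>
    have hX := sum_monicPolys_add (monic_X (R := F)) i (fun n => n ^ m)
    rw [natDegree_X] at hX
    rw [powerSum_eq_sum, hX, sum_sum_mul_add_pow]
    refine Finset.sum_eq_zero fun a ha => ?_
    rw [Finset.mem_range] at ha
    rcases Nat.lt_or_ge a i with hai | hai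
    · rw [← powerSum_eq_sum, ih hai, mul_zero]
    · have hz : (Fintype.card F : Polynomial F) = 0 := by
        rw [← map_natCast (C : F →+* Polynomial F), Nat.cast_card_eq_zero, map_zero]
      obtain rfl : a = m := by omega
      rw [sum_polysLT_one]
      simp [hz]

lemma zetaLtOne_eq_sum [DecidablePred (Monic : Polynomial F → Prop)] (d k : ℕ) :
    zetaLtOne F d k = ∑ n ∈ polysLT F d with n.Monic, n ^ k := by
  have hset : {i : ℕ | i < d} = (Finset.range d : Set ℕ) := by ext; simp
  rw [zetaLtOne, hset, finsum_mem_coe_finset]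
  simp_rw [powerSum_eq_sum]
  rw [← Finset.sum_fiberwise_of_maps_to (s := (polysLT F d).filter Monic) (t := Finset.range d)
    (g := natDegree)]
  · refine Finset.sum_congr rfl fun i hi => Finset.sum_congr ?_ fun _ _ => rfl
    ext n
    rw [Finset.mem_range] at hi
    simp only [mem_monicPolys, Finset.mem_filter, mem_polysLT]
    refine ⟨fun h => ⟨⟨?_, h.1⟩, h.2⟩, fun h => ⟨h.1.2, h.2⟩⟩
    rw [degree_eq_natDegree h.1.ne_zero, h.2]
    exact_mod_cast hi
  · intro n hn
    obtain ⟨hlt, hmonic⟩ := Finset.mem_filter.1 hn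
    rw [mem_polysLT, degree_eq_natDegree hmonic.ne_zero] at hlt
    exact Finset.mem_range.2 (by exact_mod_cast hlt)

open Classical in
/-- Power sums over all nonzero polynomials of degree less than `d`. -/
lemma sum_polysLT_ne_zero_pow (d k : ℕ) :
    ∑ c ∈ polysLT F d with c ≠ 0, c ^ k =
      if Fintype.card F - 1 ∣ k then - zetaLtOne F d k else 0 := by
  have hunits : (∑ x : Fˣ, (C (x : F)) ^ k : Polynomial F) =
      if Fintype.card F - 1 ∣ k then -1 else 0 := by
    have h := congrArg (C : F →+* Polynomial F) (FiniteField.sum_pow_units F k)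
    rw [map_sum] at h
    simp only [map_pow] at h
    rw [h]
    split_ifs <;> simp
  have hsplit : ∑ c ∈ polysLT F d with c ≠ 0, c ^ k =
      (∑ x : Fˣ, (C (x : F)) ^ k) * zetaLtOne F d k := by
    rw [zetaLtOne_eq_sum, Finset.sum_mul_sum, ← Finset.sum_product']
    symm
    refine Finset.sum_bij (fun p _ => C (p.1 : F) * p.2) ?_ ?_ ?_ ?_
    · rintro ⟨x, n⟩ hp
      simp only [Finset.mem_product, Finset.mem_filter, mem_polysLT] at hp ⊢
      refine ⟨?_, mul_ne_zero (C_ne_zero.2 x.ne_zero) hp.2.2.ne_zero⟩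
      rw [degree_C_mul x.ne_zero]
      exact hp.2.1
    · rintro ⟨x, n⟩ hp ⟨y, n'⟩ hp' h
      simp only [Finset.mem_product, Finset.mem_filter, mem_polysLT] at hp hp' h
      have hl := congrArg leadingCoeff h
      simp only [leadingCoeff_mul, leadingCoeff_C, hp.2.2.leadingCoeff,
        hp'.2.2.leadingCoeff, mul_one] at hl
      obtain rfl : x = y := Units.ext hl
      exact Prod.ext rfl (mul_left_cancel₀ (C_ne_zero.2 x.ne_zero) h)
    · intro c hc
      simp only [Finset.mem_filter, mem_polysLT] at hc
      have hlc : c.leadingCoeff ≠ 0 := leadingCoeff_ne_zero.2 hc.2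
      refine ⟨(Units.mk0 _ hlc, C c.leadingCoeff⁻¹ * c), ?_, ?_⟩
      · simp only [Finset.mem_product, Finset.mem_filter, mem_polysLT, Finset.mem_univ, true_and]
        refine ⟨?_, ?_⟩
        · rw [degree_C_mul (inv_ne_zero hlc)]
          exact hc.1
        · rw [Monic, leadingCoeff_mul, leadingCoeff_C, inv_mul_cancel₀ hlc]
      · simp only [Units.val_mk0]
        rw [← mul_assoc, ← C_mul, mul_inv_cancel₀ hlc, C_1, one_mul]
    · intro p _
      rw [mul_pow]
  rw [hsplit, hunits]
  split_ifs <;> simp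

lemma powerSumV_of_lt {v : Polynomial F} {i : ℕ} (hi : i < v.natDegree) (m : ℕ) :
    powerSumV F v i m = powerSum F i m := by
  classical
  rw [powerSumV_eq_sum, powerSum_eq_sum, Finset.filter_true_of_mem]
  intro n hn hdvd
  rw [mem_monicPolys] at hn
  have := natDegree_le_of_dvd hdvd hn.1.ne_zero
  omega

/-- The exponents `a ≤ m` congruent to `m` modulo `q - 1`. -/
def congrExponents (q m : ℕ) : Finset ℕ := {a ∈ Finset.range (m + 1) | q - 1 ∣ m - a}

lemma mem_congrExponents {q m a : ℕ} : a ∈ congrExponents q m ↔ a ≤ m ∧ q - 1 ∣ m - a := by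
  simp [congrExponents]

lemma powerSumV_add_natDegree {v : Polynomial F} (hv : v.Monic) (i m : ℕ) :
    powerSumV F v (i + v.natDegree) m =
      - ∑ a ∈ congrExponents (Fintype.card F) m,
        v ^ a * (zetaLtOne F v.natDegree (m - a) * (m.choose a : Polynomial F)) *
          powerSum F i a := by
  classical
  have hdvd : ∀ b, ∀ c ∈ polysLT F v.natDegree, (¬ v ∣ v * b + c) ↔ c ≠ 0 := by
    intro b c hc
    rw [mem_polysLT, ← degree_eq_natDegree hv.ne_zero] at hc
    rw [dvd_add_right (dvd_mul_right v b), not_iff_not]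
    exact ⟨fun h => eq_zero_of_dvd_of_degree_lt h hc, fun h => h ▸ dvd_zero v⟩
  rw [powerSumV_eq_sum, Finset.sum_filter, sum_monicPolys_add hv]
  have hinner : ∀ b ∈ monicPolys F i,
      (∑ c ∈ polysLT F v.natDegree, if ¬ v ∣ v * b + c then (v * b + c) ^ m else 0) =
        ∑ c ∈ polysLT F v.natDegree with c ≠ 0, (v * b + c) ^ m := by
    intro b _
    rw [Finset.sum_filter]
    exact Finset.sum_congr rfl fun c hc => if_congr (hdvd b c hc) rfl rfl
  rw [Finset.sum_congr rfl hinner, sum_sum_mul_add_pow, congrExponents, Finset.sum_filter,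
    ← Finset.sum_neg_distrib]
  refine Finset.sum_congr rfl fun a _ => ?_
  rw [sum_polysLT_ne_zero_pow, ← powerSum_eq_sum]
  split_ifs
  · ring
  · simp

lemma powerSumV_eq_zero {v : Polynomial F} (hv : v.Monic) {i m : ℕ}
    (h : m + v.natDegree < i) : powerSumV F v i m = 0 := by
  obtain ⟨k, rfl⟩ : ∃ k, i = k + v.natDegree := ⟨i - v.natDegree, by omega⟩
  rw [powerSumV_add_natDegree hv, Finset.sum_eq_zero, neg_zero]
  intro a ha
  rw [mem_congrExponents] at ha
  rw [powerSum_eq_zero (by omega), mul_zero]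

end FinitePolynomialSets

section AntitoneSums

variable {R : Type*} [CommRing R]

/-- A sum over a set of multi-indices of products of functions vanishing from `N` on is a
finite sum over multi-indices bounded by `N`. -/
lemma finsum_mem_prod_eq_sum {r N : ℕ} (P : (Fin r → ℕ) → Prop) [DecidablePred P] (f : Fin r → ℕ → R)
    (hf : ∀ j n, N ≤ n → f j n = 0) :
    ∑ᶠ i ∈ {i : Fin r → ℕ | P i}, ∏ j, f j (i j) =
      ∑ i ∈ Fintype.piFinset (fun _ : Fin r => Finset.range N) with P i, ∏ j, f j (i j) := by
  refine finsum_mem_eq_sum_of_inter_support_eq _ ?_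
  ext i
  simp only [Set.mem_inter_iff, Set.mem_ofPred_eq, Function.mem_support, Finset.coe_filter,
    Fintype.mem_piFinset, Finset.mem_range]
  refine ⟨fun h => ⟨⟨fun j => ?_, h.1⟩, h.2⟩, fun h => ⟨h.1.2, h.2⟩⟩
  by_contra hj
  exact h.2 (Finset.prod_eq_zero (Finset.mem_univ j) (hf j _ (not_lt.1 hj)))

/-- For an antitone multi-index, the entries that are at least `d` form an initial segment. -/
lemma card_filter_le_eq_iff {r d l : ℕ} (hl : l ≤ r) {i : Fin r → ℕ} (hi : Antitone i) :
    (Finset.univ.filter fun j => d ≤ i j).card = l ↔ ∀ j : Fin r, d ≤ i j ↔ (j : ℕ) < l := by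
  constructor
  · rintro rfl j
    constructor
    · intro hj
      have hsub : Finset.Iic j ⊆ Finset.univ.filter fun j => d ≤ i j := fun k hk =>
        Finset.mem_filter.2 ⟨Finset.mem_univ _, hj.trans (hi (Finset.mem_Iic.1 hk))⟩
      have := Finset.card_le_card hsub
      rw [Fin.card_Iic] at this
      omega
    · intro hj
      by_contra hlt
      have hsub : (Finset.univ.filter fun j => d ≤ i j) ⊆ Finset.Iio j := fun k hk => by
        rw [Finset.mem_Iio]
        by_contra hk'
        exact hlt ((Finset.mem_filter.1 hk).2.trans (hi (not_lt.1 hk')))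
      have := Finset.card_le_card hsub
      rw [Fin.card_Iio] at this
      omega
  · intro h
    simp_rw [h]
    rw [Fin.card_filter_val_lt, min_eq_right hl]

open Classical in
/-- Antitone multi-indices with exactly the first `l` entries at least `d` correspond to pairs
of antitone multi-indices, the second one bounded by `d`. -/
lemma sum_antitone_fiber_eq_mul (l s d N : ℕ) (f : ℕ → ℕ → R) :
    ∑ i ∈ Fintype.piFinset (fun _ : Fin (l + s) => Finset.range (N + d)) with
        Antitone i ∧ ∀ j : Fin (l + s), d ≤ i j ↔ (j : ℕ) < l, ∏ j : Fin (l + s), f j (i j) =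
      (∑ k ∈ Fintype.piFinset (fun _ : Fin l => Finset.range N) with Antitone k,
        ∏ j : Fin l, f j (k j + d)) *
      ∑ k ∈ Fintype.piFinset (fun _ : Fin s => Finset.range d) with Antitone k,
        ∏ j : Fin s, f (l + j) (k j) := by
  rw [Finset.sum_mul_sum, ← Finset.sum_product']
  refine Finset.sum_bij'
    (fun i _ => (fun j => i (Fin.castAdd s j) - d, fun j => i (Fin.natAdd l j)))
    (fun p _ => Fin.append (fun j => p.1 j + d) p.2) ?_ ?_ ?_ ?_ ?_
  · intro i hi
    simp only [Finset.mem_filter, Fintype.mem_piFinset, Finset.mem_range,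
      Finset.mem_product] at hi ⊢
    obtain ⟨hN, hanti, hd⟩ := hi
    refine ⟨⟨fun j => ?_, fun a b hab => ?_⟩, fun j => ?_, fun a b hab => ?_⟩
    · have h₁ := hN (Fin.castAdd s j)
      have h₂ := (hd (Fin.castAdd s j)).2 j.2
      omega
    · have h : Fin.castAdd s a ≤ Fin.castAdd s b := hab
      exact Nat.sub_le_sub_right (hanti h) d
    · have := hd (Fin.natAdd l j)
      simp only [Fin.val_natAdd] at this
      omega
    · have h : Fin.natAdd l a ≤ Fin.natAdd l b := Nat.add_le_add_left hab l
      exact hanti h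
  · rintro ⟨k, k'⟩ hp
    simp only [Finset.mem_filter, Fintype.mem_piFinset, Finset.mem_range,
      Finset.mem_product] at hp ⊢
    obtain ⟨⟨hN, hk⟩, hd, hk'⟩ := hp
    refine ⟨fun j => ?_, fun a b hab => ?_, fun j => ?_⟩
    · refine Fin.addCases (fun j => ?_) (fun j => ?_) j
      · simpa using hN j
      · have := hd j
        simp only [Fin.append_right]
        omega
    · revert hab
      refine Fin.addCases (fun a => ?_) (fun a => ?_) a <;>
        refine Fin.addCases (fun b => ?_) (fun b => ?_) b <;> intro hab
      · have h : a ≤ b := hab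
        simpa using hk h
      · have := hd b
        simp only [Fin.append_left, Fin.append_right]
        omega
      · simp only [Fin.le_def, Fin.val_natAdd, Fin.val_castAdd] at hab
        omega
      · have h : a ≤ b := Nat.le_of_add_le_add_left hab
        simpa using hk' h
    · refine Fin.addCases (fun j => ?_) (fun j => ?_) j
      · simp
      · simpa using hd j
  · intro i hi
    simp only [Finset.mem_filter, Fintype.mem_piFinset, Finset.mem_range] at hi
    funext j
    refine Fin.addCases (fun j => ?_) (fun j => ?_) j
    · have := (hi.2.2 (Fin.castAdd s j)).2 j.2
      simp only [Fin.append_left]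
      omega
    · simp
  · rintro ⟨k, k'⟩ _
    simp
  · intro i hi
    simp only [Finset.mem_filter, Fintype.mem_piFinset, Finset.mem_range] at hi
    rw [Fin.prod_univ_add]
    congr 1
    refine Finset.prod_congr rfl fun j _ => ?_
    have := (hi.2.2 (Fin.castAdd s j)).2 j.2
    rw [Nat.sub_add_cancel this, Fin.val_castAdd]

/-- Splitting a sum over antitone multi-indices according to the number of entries that are at
least `d`. -/
lemma finsum_antitone_eq_sum_mul (r d N : ℕ) (f : ℕ → ℕ → R)
    (hf : ∀ j < r, ∀ n, N + d ≤ n → f j n = 0) :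
    ∑ᶠ i ∈ {i : Fin r → ℕ | Antitone i}, ∏ j : Fin r, f j (i j) =
      ∑ l ∈ Finset.range (r + 1),
        (∑ᶠ k ∈ {k : Fin l → ℕ | Antitone k}, ∏ j : Fin l, f j (k j + d)) *
        ∑ᶠ k ∈ {k : Fin (r - l) → ℕ | Antitone k ∧ ∀ j, k j < d},
          ∏ j : Fin (r - l), f (l + j) (k j) := by
  classical
  rw [finsum_mem_prod_eq_sum (N := N + d) _ (fun j : Fin r => f j) fun j => hf j j.2,
    ← Finset.sum_fiberwise_of_maps_to (t := Finset.range (r + 1))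
      (g := fun i : Fin r → ℕ => (Finset.univ.filter fun j => d ≤ i j).card)]
  · refine Finset.sum_congr rfl fun l hl => ?_
    obtain ⟨s, rfl⟩ : ∃ s, r = l + s := ⟨r - l, by rw [Finset.mem_range] at hl; omega⟩
    rw [Nat.add_sub_cancel_left,
      finsum_mem_prod_eq_sum (N := N) _ (fun (j : Fin l) n => f j (n + d))
        fun j n hn => hf j (by omega) _ (by omega)]
    have htrunc : ∑ᶠ k ∈ {k : Fin s → ℕ | Antitone k ∧ ∀ j, k j < d},
          ∏ j : Fin s, f (l + j) (k j) =
        ∑ k ∈ Fintype.piFinset (fun _ : Fin s => Finset.range d) with Antitone k,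
          ∏ j : Fin s, f (l + j) (k j) := by
      rw [← finsum_mem_coe_finset]
      congr! 4 with k
      simp [and_comm]
    rw [htrunc, ← sum_antitone_fiber_eq_mul, Finset.filter_filter]
    refine Finset.sum_congr (Finset.filter_congr fun i _ => and_congr_right fun hi => ?_)
      fun _ _ => rfl
    exact card_filter_le_eq_iff (by omega) hi
  · intro i _
    rw [Finset.mem_range, Nat.lt_succ_iff]
    exact (Finset.card_filter_le _ _).trans (by simp)

end AntitoneSums

/-- Extension by zero of a tuple to a function on `ℕ`. -/
def extendByZero {l : ℕ} (a : Fin l → ℕ) (j : ℕ) : ℕ := if h : j < l then a ⟨j, h⟩ else 0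

@[simp]
lemma extendByZero_val {l : ℕ} (a : Fin l → ℕ) (j : Fin l) : extendByZero a j = a j := by
  simp [extendByZero]

lemma extendByZero_injective (l : ℕ) :
    Function.Injective (extendByZero : (Fin l → ℕ) → ℕ → ℕ) := fun a b h => by
  funext j
  simpa using congrFun h j

/-- Sums over functions on `ℕ` vanishing from `l` on, as sums over tuples. -/
lemma finsum_mem_vanishing_eq_sum {M : Type*} [AddCommMonoid M] (l : ℕ) (T : ℕ → Finset ℕ)
    (g : (ℕ → ℕ) → M) :
    ∑ᶠ a ∈ {a : ℕ → ℕ | (∀ j < l, a j ∈ T j) ∧ ∀ j, l ≤ j → a j = 0}, g a =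
      ∑ a ∈ Fintype.piFinset (fun j : Fin l => T j), g (extendByZero a) := by
  have hset : {a : ℕ → ℕ | (∀ j < l, a j ∈ T j) ∧ ∀ j, l ≤ j → a j = 0} =
      extendByZero '' (Fintype.piFinset (fun j : Fin l => T j) : Set (Fin l → ℕ)) := by
    ext a
    simp only [Set.mem_ofPred_eq, Set.mem_image, Finset.mem_coe, Fintype.mem_piFinset]
    constructor
    · rintro ⟨h₁, h₂⟩
      refine ⟨fun j => a j, fun j => h₁ j j.2, funext fun j => ?_⟩
      by_cases hj : j < l
      · simp [extendByZero, hj]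
      · simp [extendByZero, hj, h₂ j (not_lt.1 hj)]
    · rintro ⟨b, hb, rfl⟩
      refine ⟨fun j hj => ?_, fun j hj => ?_⟩
      · simpa [extendByZero, hj] using hb ⟨j, hj⟩
      · simp [extendByZero, not_lt.2 hj]
  rw [hset, finsum_mem_image (extendByZero_injective l).injOn, finsum_mem_coe_finset]

/-- The contribution of the multi-indices all of whose entries are at least `deg v`. -/
lemma finsum_antitone_powerSumV_add_natDegree {F : Type*} [Field F] [Fintype F]
    {v : Polynomial F} (hv : v.Monic) (l : ℕ) (m : ℕ → ℕ) :
    ∑ᶠ k ∈ {k : Fin l → ℕ | Antitone k},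
        ∏ j : Fin l, powerSumV F v (k j + v.natDegree) (m j) =
      (-1) ^ l * ∑ᶠ a ∈ {a : ℕ → ℕ |
          (∀ j < l, a j ≤ m j ∧ (Fintype.card F - 1) ∣ (m j - a j)) ∧ ∀ j, l ≤ j → a j = 0},
        v ^ (∑ j ∈ Finset.range l, a j) *
          (∏ j ∈ Finset.range l,
            zetaLtOne F v.natDegree (m j - a j) * (Nat.choose (m j) (a j) : Polynomial F)) *
          zetaInfStar F l a := by
  classical
  have hm : ∀ j : Fin l, m j ≤ ∑ j : Fin l, m j := fun j =>
    Finset.single_le_sum (f := fun j : Fin l => m j) (fun _ _ => Nat.zero_le _)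
      (Finset.mem_univ j)
  simp_rw [← mem_congrExponents]
  rw [finsum_mem_vanishing_eq_sum l (fun j => congrExponents (Fintype.card F) (m j)),
    finsum_mem_prod_eq_sum (N := ∑ j : Fin l, m j + 1) _
      (fun (j : Fin l) n => powerSumV F v (n + v.natDegree) (m j))
      fun j n hn => powerSumV_eq_zero hv (by have := hm j; omega)]
  simp_rw [powerSumV_add_natDegree hv, Finset.prod_neg, Finset.card_univ, Fintype.card_fin,
    ← Finset.mul_sum, Finset.prod_univ_sum]
  rw [Finset.sum_comm]
  congr 1
  refine Finset.sum_congr rfl fun a ha => ?_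
  rw [zetaInfStar, finsum_mem_prod_eq_sum (N := ∑ j : Fin l, m j + 1) _
    (fun (j : Fin l) n => powerSum F n (extendByZero a j)) fun j n hn => ?_, Finset.mul_sum]
  · refine Finset.sum_congr rfl fun k _ => ?_
    simp only [← Fin.sum_univ_eq_sum_range, ← Fin.prod_univ_eq_prod_range
      (fun j => zetaLtOne F v.natDegree (m j - extendByZero a j) *
        (Nat.choose (m j) (extendByZero a j) : Polynomial F)), extendByZero_val,
      Finset.prod_mul_distrib, Finset.prod_pow_eq_pow_sum]
  · have h₁ := (mem_congrExponents.1 (Fintype.mem_piFinset.1 ha j)).1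
    have h₂ := hm j
    rw [extendByZero_val]
    exact powerSum_eq_zero (by omega)

/-- Formula for v-adic multiple zeta star values at negative integers in terms of
∞-adic ones.  The inner sum runs over tuples `(a_1, …, a_l)` (encoded as functions
`a : ℕ → ℕ` vanishing from index `l` on) with `0 ≤ a_j ≤ m_j` and `(q-1) ∣ (m_j - a_j)`. -/
theorem zetaVStar_eq_sum_zetaInfStar (F : Type*) [Field F] [Fintype F] (v : Polynomial F)
    (hv : v.Monic) (hvirr : Irreducible v) (hd : 0 < v.natDegree) (r : ℕ) (hr : 1 ≤ r)
    (m : ℕ → ℕ) :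
    zetaVStar F v r m =
      ∑ l ∈ Finset.range (r + 1),
        (-1 : Polynomial F) ^ l * zetaLtStar F v.natDegree (r - l) (fun j => m (l + j)) *
          ∑ᶠ a ∈ {a : ℕ → ℕ |
              (∀ j < l, a j ≤ m j ∧ (Fintype.card F - 1) ∣ (m j - a j)) ∧
                ∀ j, l ≤ j → a j = 0},
            v ^ (∑ j ∈ Finset.range l, a j) *
              (∏ j ∈ Finset.range l,
                zetaLtOne F v.natDegree (m j - a j) * (Nat.choose (m j) (a j) : Polynomial F)) *
              zetaInfStar F l a := by
  rw [zetaVStar, finsum_antitone_eq_sum_mul r v.natDegree (∑ j ∈ Finset.range r, m j + 1)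
    (fun j n => powerSumV F v n (m j))]
  · refine Finset.sum_congr rfl fun l _ => ?_
    have htrunc : ∑ᶠ k ∈ {k : Fin (r - l) → ℕ | Antitone k ∧ ∀ j, k j < v.natDegree},
          ∏ j : Fin (r - l), powerSumV F v (k j) (m (l + j)) =
        zetaLtStar F v.natDegree (r - l) (fun j => m (l + j)) :=
      finsum_mem_congr rfl fun k hk =>
        Finset.prod_congr rfl fun j _ => powerSumV_of_lt (hk.2 j) _
    rw [htrunc, finsum_antitone_powerSumV_add_natDegree hv]
    ring
  · intro j hj n hn
    have := Finset.single_le_sum (f := m) (fun _ _ => Nat.zero_le _) (Finset.mem_range.2 hj)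
    exact powerSumV_eq_zero hv (by omega)
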